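/- In the deconvolution setting with data f = K*g and κ ≤ l_min/6: let u_2 ∈ PC[0,1] and assume 6·h_max·κ ≤ (1/2)·h_min·(l_min − 2κ) − γ and 2·κ·h_max ≤ γ. Then there exists u_3 ∈ PC[0,1] which has no jump in ∪_i N_i and exactly one jump in each interval J_i, i = 1,...,n, and which satisfies P_γ(u_3) ≤ P_γ(u_2). -/

import Mathlib

open MeasureTheory Filter Set
open scoped ENNReal Classical

noncomputable section

/-- The Lebesgue measure restricted to `[0,1]`. -/
def mu01 : Measure ℝ := volume.restrict (Set.Icc (0:ℝ) 1)

/-- The step function determined by partition points `x` and values `a`. -/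
def stepF {m : ℕ} (x : Fin (m + 1) → ℝ) (a : Fin m → ℝ) : ℝ → ℝ := fun t =>
  ∑ l : Fin m, Set.indicator (Set.Ioo (x l.castSucc) (x l.succ)) (fun _ => a l) t

/-- `u` is a.e. on `[0,1]` represented by the step function with partition `x` and values `a`. -/
def IsPCRep (u : ℝ → ℝ) {m : ℕ} (x : Fin (m + 1) → ℝ) (a : Fin m → ℝ) : Prop :=
  StrictMono x ∧ x 0 = 0 ∧ x (Fin.last m) = 1 ∧ ∀ᵐ t ∂mu01, u t = stepF x a t

/-- `u` is piecewise constant on `[0,1]` (up to a.e. equality). -/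
def IsPC (u : ℝ → ℝ) : Prop :=
  ∃ (m : ℕ) (x : Fin (m + 1) → ℝ) (a : Fin m → ℝ), IsPCRep u x a

/-- The number of jumps `J(u)`: the minimal number of interior partition points over all
piecewise constant representations of `u`. -/
def jumps (u : ℝ → ℝ) : ℕ :=
  sInf {jj : ℕ | ∃ (x : Fin (jj + 2) → ℝ) (a : Fin (jj + 1) → ℝ), IsPCRep u x a}

/-- `u` is piecewise constant with all jump locations inside `S`. -/
def IsPCIn (u : ℝ → ℝ) (S : Set ℝ) : Prop :=
  ∃ (m : ℕ) (x : Fin (m + 1) → ℝ) (a : Fin m → ℝ), IsPCRep u x a ∧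
    ∀ i : Fin (m + 1), i ≠ 0 → i ≠ Fin.last m → x i ∈ S

/-- The `L¹[0,1]` distance of two functions. -/
def L1dist (u v : ℝ → ℝ) : ℝ := ∫ t, |u t - v t| ∂mu01

/-- The continuous `L¹`-Potts functional `P_γ` with data `f`. -/
def Potts (γ : ℝ) (f u : ℝ → ℝ) : ℝ≥0∞ :=
  if IsPC u then ENNReal.ofReal (γ * (jumps u : ℝ) + L1dist u f) else ⊤

/-- The (semi-)discrete `L¹`-Potts functional with data `f`, restricted to piecewise
constant functions whose jumps lie in `S`. -/
def PottsIn (γ : ℝ) (f : ℝ → ℝ) (S : Set ℝ) (u : ℝ → ℝ) : ℝ≥0∞ :=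
  if IsPCIn u S then ENNReal.ofReal (γ * (jumps u : ℝ) + L1dist u f) else ⊤

/-- Convolution `(K*g)(t) = ∫ K(s)·g(t−s) ds`. -/
def convK (K g : ℝ → ℝ) : ℝ → ℝ := fun t => ∫ s, K s * g (t - s)

/-- The piecewise constant function on `ℝ` with jump locations `j` and values `α`
(extended constantly outside the jump region): at `t`, its value is `α i` where `i`
is the number of jump locations strictly below `t`. -/
def stepOn {n : ℕ} (j : Fin n → ℝ) (α : Fin (n + 1) → ℝ) : ℝ → ℝ := fun t =>
  α ⟨(Finset.univ.filter fun i => j i < t).card,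
      Nat.lt_succ_of_le ((Finset.card_filter_le _ _).trans (by simp))⟩

/-- The jump locations together with the endpoints `0` and `1`. -/
def jext {n : ℕ} (j : Fin (n + 1) → ℝ) : Fin (n + 3) → ℝ :=
  Fin.cons (0 : ℝ) (Fin.snoc j (1 : ℝ))

/-- The minimal length `l_min` of the intervals of constancy (inside `[0,1]`). -/
def lmin {n : ℕ} (j : Fin (n + 1) → ℝ) : ℝ :=
  Finset.univ.inf' Finset.univ_nonempty
    fun i : Fin (n + 2) => jext j i.succ - jext j i.castSucc

/-- The minimal jump height `h_min`. -/
def hjumpMin {n : ℕ} (α : Fin (n + 2) → ℝ) : ℝ :=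
  Finset.univ.inf' Finset.univ_nonempty fun i : Fin (n + 1) => |α i.succ - α i.castSucc|

/-- The maximal jump height `h_max`. -/
def hjumpMax {n : ℕ} (α : Fin (n + 2) → ℝ) : ℝ :=
  Finset.univ.sup' Finset.univ_nonempty fun i : Fin (n + 1) => |α i.succ - α i.castSucc|

/-- The (real-valued) `L¹`-Potts value `γ·J(u) + ‖u − f‖₁` for piecewise constant `u`. -/
def PottsVal (γ : ℝ) (f u : ℝ → ℝ) : ℝ := γ * (jumps u : ℝ) + L1dist u f

/-!
Across a single jump of `g` from `A` to `B` at `p` the datum is `A + Φ (t - p) * (B - A)`, where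
`Φ` is the distribution function of `K`. Displacing every jump of `g` by a median of `K`, which
lies in `[-κ, κ]`, therefore gives a step function `w` that is everywhere at least as close to
`K * g` as both neighbouring values of `g` are. Its `L¹` error lives in the intervals
`[p - κ, p + κ]` and is at most `κ |B - A|` in each.

This `w` minimises the Potts functional: on each of the disjoint windows of radius `r = l_min / 2`
around the jumps, any competitor costs at least as much as `w`. Without a jump there, its `L¹`
error is at least `(r - κ) |B - A|`, which outweighs the saved `γ`. With two or more jumps it pays
an additional `γ ≥ κ |B - A|`. With exactly one jump, each of its two pieces is constant, and what
it gains over `w` by taking a value `c` other than `A` (or `B`) on part of `[p - κ, p + κ]`, a set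
of length at most `2 κ`, it loses on the adjacent plateau of the datum, of length
`r - κ ≥ 2 κ`.
-/

section SetIntegral

variable {X : Type*} [MeasurableSpace X] {μ : Measure X}

lemma setIntegral_add_setIntegral_le {F : X → ℝ} {S T W : Set X} (hT : MeasurableSet T)
    (hdisj : Disjoint S T) (hSW : S ⊆ W) (hTW : T ⊆ W) (hF : IntegrableOn F W μ)
    (hF0 : ∀ t, 0 ≤ F t) :
    ∫ t in S, F t ∂μ + ∫ t in T, F t ∂μ ≤ ∫ t in W, F t ∂μ := by
  rw [← setIntegral_union hdisj hT (hF.mono_set hSW) (hF.mono_set hTW)]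
  exact setIntegral_mono_set hF (ae_of_all _ hF0) (ae_of_all _ (union_subset hSW hTW))

lemma sum_setIntegral_le {ι : Type*} [Fintype ι] {F : X → ℝ} {E : ι → Set X} {W : Set X}
    (hE : ∀ i, MeasurableSet (E i)) (hdisj : Pairwise (Function.onFun Disjoint E))
    (hEW : ∀ i, E i ⊆ W) (hF : IntegrableOn F W μ) (hF0 : ∀ t, 0 ≤ F t) :
    ∑ i, ∫ t in E i, F t ∂μ ≤ ∫ t in W, F t ∂μ := by
  rw [← integral_iUnion_fintype hE hdisj fun i => hF.mono_set (hEW i)]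
  exact setIntegral_mono_set hF (ae_of_all _ hF0) (ae_of_all _ (iUnion_subset hEW))

lemma setIntegral_eq_sum_of_eq_zero {ι : Type*} [Fintype ι] {F : X → ℝ} {E : ι → Set X}
    {W : Set X} (hW : MeasurableSet W) (hE : ∀ i, MeasurableSet (E i))
    (hdisj : Pairwise (Function.onFun Disjoint E)) (hEW : ∀ i, E i ⊆ W)
    (hF : IntegrableOn F W μ) (hF0 : ∀ t ∈ W, (∀ i, t ∉ E i) → F t = 0) :
    ∫ t in W, F t ∂μ = ∑ i, ∫ t in E i, F t ∂μ := by
  rw [← integral_iUnion_fintype hE hdisj fun i => hF.mono_set (hEW i)]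
  exact setIntegral_eq_of_subset_of_forall_sdiff_eq_zero hW (iUnion_subset hEW)
    fun t ht => hF0 t ht.1 fun i hi => ht.2 (mem_iUnion_of_mem i hi)

-- Replacing the value `c` of `v` on `T` by `A` costs at most `μ T * |c - A|`, which `v` already
-- pays on the part `S`, where `f = A`.
lemma setIntegral_abs_sub_le_of_const {f v w : X → ℝ} {S T : Set X} {c A : ℝ}
    (hS : MeasurableSet S) (hT : MeasurableSet T) (hdisj : Disjoint S T) (hTS : μ T ≤ μ S)
    (hS_fin : μ S ≠ ∞) (hf : ∀ t ∈ S, f t = A) (hv : ∀ t ∈ S ∪ T, v t = c)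
    (hw : ∀ t ∈ T, |w t - f t| ≤ |f t - A|)
    (hint : IntegrableOn (fun t => |v t - f t|) (S ∪ T) μ) :
    ∫ t in T, |w t - f t| ∂μ ≤ ∫ t in S ∪ T, |v t - f t| ∂μ := by
  have hT_fin : μ T ≠ ∞ := ne_top_of_le_ne_top hS_fin hTS
  have hconst : IntegrableOn (fun _ => |c - A|) T μ := integrableOn_const hT_fin
  have integral_S : ∫ t in S, |v t - f t| ∂μ = μ.real S * |c - A| := by
    rw [setIntegral_congr_fun hS fun t ht => by rw [hv t (.inl ht), hf t ht], setIntegral_const,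
      smul_eq_mul]
  calc ∫ t in T, |w t - f t| ∂μ
    _ ≤ ∫ t in T, (|v t - f t| + |c - A|) ∂μ := by
        refine integral_mono_of_nonneg (ae_of_all _ fun t => abs_nonneg _)
          (hint.right_of_union.add hconst) (ae_restrict_of_forall_mem hT fun t ht => ?_)
        have hvt : |v t - f t| = |f t - c| := by rw [hv t (.inr ht), abs_sub_comm]
        calc |w t - f t|
          _ ≤ |f t - A| := hw t ht
          _ ≤ |f t - c| + |c - A| := abs_sub_le _ c _
          _ = |v t - f t| + |c - A| := by rw [hvt]
    _ = ∫ t in T, |v t - f t| ∂μ + μ.real T * |c - A| := by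
        rw [integral_add hint.right_of_union hconst, setIntegral_const, smul_eq_mul]
    _ ≤ ∫ t in T, |v t - f t| ∂μ + μ.real S * |c - A| :=
        add_le_add le_rfl
          (mul_le_mul_of_nonneg_right (ENNReal.toReal_mono hS_fin hTS) (abs_nonneg _))
    _ = ∫ t in S ∪ T, |v t - f t| ∂μ := by
        rw [setIntegral_union hdisj hT hint.left_of_union hint.right_of_union, integral_S, add_comm]

lemma setIntegral_inter_Iio_add_inter_Ioi {F : ℝ → ℝ} {T : Set ℝ} (y : ℝ)
    (hF : IntegrableOn F T) :
    (∫ t in T ∩ Iio y, F t) + ∫ t in T ∩ Ioi y, F t = ∫ t in T, F t := by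
  rw [← integral_inter_add_sdiff measurableSet_Iic hF, sdiff_eq, compl_Iic,
    setIntegral_congr_set (ae_eq_set_inter (ae_eq_refl T) Iio_ae_eq_Iic)]

end SetIntegral

/-- On the window `(p - r, p + r)` the function `f` passes from the value `A` to the value `B`
within `[p - κ, p + κ]`, and `w` is a sharp version of it: at every point it is at least as close
to `f` as both `A` and `B` are. -/
structure IsSharpTransition (f w : ℝ → ℝ) (p κ r A B : ℝ) : Prop where
  eq_left : ∀ t ∈ Ioo (p - r) (p - κ), f t = A
  eq_right : ∀ t ∈ Ioo (p + κ) (p + r), f t = B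
  mem_segment : ∀ t ∈ Ioo (p - r) (p + r), f t ∈ segment ℝ A B
  abs_sub_le_left : ∀ t ∈ Ioo (p - r) (p + r), |w t - f t| ≤ |f t - A|
  abs_sub_le_right : ∀ t ∈ Ioo (p - r) (p + r), |w t - f t| ≤ |f t - B|

namespace IsSharpTransition

variable {f v w : ℝ → ℝ} {p κ r A B : ℝ}

lemma setIntegral_eq (h : IsSharpTransition f w p κ r A B) (hκr : κ < r) :
    ∫ t in Ioo (p - r) (p + r), |w t - f t| = ∫ t in Icc (p - κ) (p + κ), |w t - f t| := by
  refine setIntegral_eq_of_subset_of_forall_sdiff_eq_zero measurableSet_Ioo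
    (Icc_subset_Ioo (by linarith) (by linarith)) fun t ⟨htW, htI⟩ => ?_
  refine le_antisymm ?_ (abs_nonneg _)
  rcases lt_or_ge t (p - κ) with hleft | hleft
  · simpa [h.eq_left t ⟨htW.1, hleft⟩] using h.abs_sub_le_left t htW
  · have hright : p + κ < t := by
      by_contra! hle
      exact htI ⟨hleft, hle⟩
    simpa [h.eq_right t ⟨hright, htW.2⟩] using h.abs_sub_le_right t htW

lemma abs_sub_le_half (h : IsSharpTransition f w p κ r A B) {t : ℝ}
    (ht : t ∈ Ioo (p - r) (p + r)) : |w t - f t| ≤ |B - A| / 2 := by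
  have hsum : |f t - A| + |f t - B| = |B - A| := by
    have := dist_add_dist_of_mem_segment (h.mem_segment t ht)
    simpa only [Real.dist_eq, abs_sub_comm] using this
  linarith [h.abs_sub_le_left t ht, h.abs_sub_le_right t ht]

lemma setIntegral_le (h : IsSharpTransition f w p κ r A B) (hκ : 0 ≤ κ) (hκr : κ < r) :
    ∫ t in Ioo (p - r) (p + r), |w t - f t| ≤ κ * |B - A| := by
  have hsub : Icc (p - κ) (p + κ) ⊆ Ioo (p - r) (p + r) :=
    Icc_subset_Ioo (by linarith) (by linarith)
  calc ∫ t in Ioo (p - r) (p + r), |w t - f t|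
    _ = ∫ t in Icc (p - κ) (p + κ), |w t - f t| := h.setIntegral_eq hκr
    _ ≤ ∫ _ in Icc (p - κ) (p + κ), |B - A| / 2 :=
        integral_mono_of_nonneg (ae_of_all _ fun t => abs_nonneg _) (integrable_const _)
          (ae_restrict_of_forall_mem measurableSet_Icc fun t ht => h.abs_sub_le_half (hsub ht))
    _ = κ * |B - A| := by
        rw [setIntegral_const, Real.volume_real_Icc_of_le (by linarith), smul_eq_mul]
        ring

lemma le_setIntegral_of_const (h : IsSharpTransition f w p κ r A B) (hκ : 0 ≤ κ) (hκr : κ < r)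
    {c : ℝ} (hv : ∀ t ∈ Ioo (p - r) (p + r), v t = c)
    (hint : IntegrableOn (fun t => |v t - f t|) (Ioo (p - r) (p + r))) :
    (r - κ) * |B - A| ≤ ∫ t in Ioo (p - r) (p + r), |v t - f t| := by
  have hleft : Ioo (p - r) (p - κ) ⊆ Ioo (p - r) (p + r) := Ioo_subset_Ioo_right (by linarith)
  have hright : Ioo (p + κ) (p + r) ⊆ Ioo (p - r) (p + r) := Ioo_subset_Ioo_left (by linarith)
  have integral_left : ∫ t in Ioo (p - r) (p - κ), |v t - f t| = (r - κ) * |c - A| := by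
    rw [setIntegral_congr_fun measurableSet_Ioo
      fun t ht => by rw [hv t (hleft ht), h.eq_left t ht], setIntegral_const,
      Real.volume_real_Ioo_of_le (by linarith), smul_eq_mul]
    ring
  have integral_right : ∫ t in Ioo (p + κ) (p + r), |v t - f t| = (r - κ) * |c - B| := by
    rw [setIntegral_congr_fun measurableSet_Ioo
      fun t ht => by rw [hv t (hright ht), h.eq_right t ht], setIntegral_const,
      Real.volume_real_Ioo_of_le (by linarith), smul_eq_mul]
    ring
  calc (r - κ) * |B - A|
    _ ≤ (r - κ) * (|c - A| + |c - B|) := by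
        refine mul_le_mul_of_nonneg_left ?_ (by linarith)
        rw [add_comm, abs_sub_comm c B]
        exact abs_sub_le _ _ _
    _ = (∫ t in Ioo (p - r) (p - κ), |v t - f t|) + ∫ t in Ioo (p + κ) (p + r), |v t - f t| := by
        rw [integral_left, integral_right, mul_add]
    _ ≤ ∫ t in Ioo (p - r) (p + r), |v t - f t| :=
        setIntegral_add_setIntegral_le measurableSet_Ioo
          (Set.disjoint_left.2 fun t ht ht' => by linarith [ht.2, ht'.1]) hleft hright hint
          fun t => abs_nonneg _

lemma setIntegral_inter_Iio_le (h : IsSharpTransition f w p κ r A B) (hκ : 0 ≤ κ)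
    (hκr : κ < r) (h3κ : 3 * κ ≤ r) {y c : ℝ}
    (hv : ∀ t ∈ Ioo (p - r) (p + r) ∩ Iio y, v t = c)
    (hint : IntegrableOn (fun t => |v t - f t|) (Ioo (p - r) (p + r))) :
    ∫ t in Icc (p - κ) (p + κ) ∩ Iio y, |w t - f t| ≤
      ∫ t in Ioo (p - r) (p + r) ∩ Iio y, |v t - f t| := by
  have hIW : Icc (p - κ) (p + κ) ⊆ Ioo (p - r) (p + r) :=
    Icc_subset_Ioo (by linarith) (by linarith)
  rcases lt_or_ge (p - κ) y with hy | hy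
  · have hsub : Ioo (p - r) (p - κ) ∪ Icc (p - κ) (p + κ) ∩ Iio y ⊆
        Ioo (p - r) (p + r) ∩ Iio y :=
      union_subset (fun t ht => ⟨⟨ht.1, by linarith [ht.2]⟩, ht.2.trans hy⟩)
        (inter_subset_inter_left _ hIW)
    have hvol : volume (Icc (p - κ) (p + κ) ∩ Iio y) ≤ volume (Ioo (p - r) (p - κ)) := by
      refine (measure_mono inter_subset_left).trans ?_
      rw [Real.volume_Icc, Real.volume_Ioo]
      exact ENNReal.ofReal_le_ofReal (by linarith)
    have hintW := hint.mono_set (inter_subset_left (t := Iio y))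
    exact (setIntegral_abs_sub_le_of_const measurableSet_Ioo
      (measurableSet_Icc.inter measurableSet_Iio)
      (Set.disjoint_left.2 fun t ht ht' => by linarith [ht.2, ht'.1.1]) hvol
      measure_Ioo_lt_top.ne h.eq_left (fun t ht => hv t (hsub ht))
      (fun t ht => h.abs_sub_le_left t (hIW ht.1)) (hintW.mono_set hsub)).trans
      (setIntegral_mono_set hintW (ae_of_all _ fun t => abs_nonneg _) (ae_of_all _ hsub))
  · have hempty : Icc (p - κ) (p + κ) ∩ Iio y = ∅ :=
      eq_empty_of_forall_notMem fun t ht => (hy.trans ht.1.1).not_gt ht.2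
    rw [hempty, setIntegral_empty]
    exact integral_nonneg fun t => abs_nonneg _

lemma setIntegral_inter_Ioi_le (h : IsSharpTransition f w p κ r A B) (hκ : 0 ≤ κ)
    (hκr : κ < r) (h3κ : 3 * κ ≤ r) {y c : ℝ}
    (hv : ∀ t ∈ Ioo (p - r) (p + r) ∩ Ioi y, v t = c)
    (hint : IntegrableOn (fun t => |v t - f t|) (Ioo (p - r) (p + r))) :
    ∫ t in Icc (p - κ) (p + κ) ∩ Ioi y, |w t - f t| ≤
      ∫ t in Ioo (p - r) (p + r) ∩ Ioi y, |v t - f t| := by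
  have hIW : Icc (p - κ) (p + κ) ⊆ Ioo (p - r) (p + r) :=
    Icc_subset_Ioo (by linarith) (by linarith)
  rcases lt_or_ge y (p + κ) with hy | hy
  · have hsub : Ioo (p + κ) (p + r) ∪ Icc (p - κ) (p + κ) ∩ Ioi y ⊆
        Ioo (p - r) (p + r) ∩ Ioi y :=
      union_subset (fun t ht => ⟨⟨by linarith [ht.1], ht.2⟩, hy.trans ht.1⟩)
        (inter_subset_inter_left _ hIW)
    have hvol : volume (Icc (p - κ) (p + κ) ∩ Ioi y) ≤ volume (Ioo (p + κ) (p + r)) := by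
      refine (measure_mono inter_subset_left).trans ?_
      rw [Real.volume_Icc, Real.volume_Ioo]
      exact ENNReal.ofReal_le_ofReal (by linarith)
    have hintW := hint.mono_set (inter_subset_left (t := Ioi y))
    exact (setIntegral_abs_sub_le_of_const measurableSet_Ioo
      (measurableSet_Icc.inter measurableSet_Ioi)
      (Set.disjoint_left.2 fun t ht ht' => by linarith [ht.1, ht'.1.2]) hvol
      measure_Ioo_lt_top.ne h.eq_right (fun t ht => hv t (hsub ht))
      (fun t ht => h.abs_sub_le_right t (hIW ht.1)) (hintW.mono_set hsub)).trans
      (setIntegral_mono_set hintW (ae_of_all _ fun t => abs_nonneg _) (ae_of_all _ hsub))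
  · have hempty : Icc (p - κ) (p + κ) ∩ Ioi y = ∅ :=
      eq_empty_of_forall_notMem fun t ht => (ht.1.2.trans hy).not_gt ht.2
    rw [hempty, setIntegral_empty]
    exact integral_nonneg fun t => abs_nonneg _

lemma setIntegral_le_of_one_jump (h : IsSharpTransition f w p κ r A B) (hκ : 0 ≤ κ)
    (hκr : κ < r) (h3κ : 3 * κ ≤ r) {y c d : ℝ}
    (hc : ∀ t ∈ Ioo (p - r) (p + r) ∩ Iio y, v t = c)
    (hd : ∀ t ∈ Ioo (p - r) (p + r) ∩ Ioi y, v t = d)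
    (hw : IntegrableOn (fun t => |w t - f t|) (Ioo (p - r) (p + r)))
    (hv : IntegrableOn (fun t => |v t - f t|) (Ioo (p - r) (p + r))) :
    ∫ t in Ioo (p - r) (p + r), |w t - f t| ≤ ∫ t in Ioo (p - r) (p + r), |v t - f t| := by
  have hIW : Icc (p - κ) (p + κ) ⊆ Ioo (p - r) (p + r) :=
    Icc_subset_Ioo (by linarith) (by linarith)
  rw [h.setIntegral_eq hκr, ← setIntegral_inter_Iio_add_inter_Ioi y (hw.mono_set hIW),
    ← setIntegral_inter_Iio_add_inter_Ioi y hv]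
  exact add_le_add (h.setIntegral_inter_Iio_le hκ hκr h3κ hc hv)
    (h.setIntegral_inter_Ioi_le hκ hκr h3κ hd hv)

end IsSharpTransition

section StepFunctions

variable {m : ℕ} {x : Fin (m + 1) → ℝ} {a : Fin m → ℝ}

lemma exists_mem_Ico_castSucc_succ {t : ℝ} (h0 : x 0 ≤ t) (h1 : t < x (Fin.last m)) :
    ∃ l : Fin m, t ∈ Ico (x l.castSucc) (x l.succ) := by
  by_contra! hnot
  have hle : ∀ k, x k ≤ t := fun k => by
    induction k using Fin.induction with
    | zero => exact h0
    | succ k ih => exact not_lt.1 fun hlt => hnot k ⟨ih, hlt⟩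
  exact h1.not_ge (hle _)

lemma stepF_eq_of_mem (hx : StrictMono x) {l : Fin m} {t : ℝ}
    (ht : t ∈ Ioo (x l.castSucc) (x l.succ)) : stepF x a t = a l := by
  have hother : ∀ b, b ≠ l → t ∉ Ioo (x b.castSucc) (x b.succ) := by
    rintro b hb ⟨h1, h2⟩
    rcases lt_or_gt_of_ne hb with h | h
    · exact (h2.trans_le (hx.monotone (Fin.succ_le_castSucc_iff.2 h))).not_gt ht.1
    · exact (h1.trans ht.2).not_ge (hx.monotone (Fin.succ_le_castSucc_iff.2 h))
  rw [stepF, Fintype.sum_eq_single l fun b hb => indicator_of_notMem (hother b hb) _,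
    indicator_of_mem ht]

lemma exists_stepF_eq_const (hx : StrictMono x) {p q : ℝ} (h0 : x 0 ≤ p)
    (h1 : p < x (Fin.last m)) (hnone : ∀ k, x k ∉ Ioo p q) :
    ∃ c, ∀ t ∈ Ioo p q, stepF x a t = c := by
  obtain ⟨l, hl, hl'⟩ := exists_mem_Ico_castSucc_succ h0 h1
  have hq : q ≤ x l.succ := not_lt.1 fun hlt => hnone _ ⟨hl', hlt⟩
  exact ⟨a l, fun t ht => stepF_eq_of_mem hx ⟨hl.trans_lt ht.1, ht.2.trans_le hq⟩⟩

lemma integrable_stepF : Integrable (stepF x a) :=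
  integrable_finsetSum _ fun _ _ =>
    (integrable_indicator_iff measurableSet_Ioo).2 (integrableOn_const measure_Ioo_lt_top.ne)

lemma exists_isPCRep_jumps {u : ℝ → ℝ} (hu : IsPC u) :
    ∃ (x : Fin (jumps u + 2) → ℝ) (a : Fin (jumps u + 1) → ℝ), IsPCRep u x a := by
  refine Nat.sInf_mem (s := {jj : ℕ | ∃ (x : Fin (jj + 2) → ℝ) (a : Fin (jj + 1) → ℝ),
    IsPCRep u x a}) ?_
  obtain ⟨m, x, a, h⟩ := hu
  cases m with
  | zero => exact absurd (h.2.1.symm.trans h.2.2.1) zero_ne_one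
  | succ m => exact ⟨m, x, a, h⟩

lemma sum_card_filter_mem_le {k : ℕ} {x : Fin (k + 2) → ℝ} {ι : Type*} [Fintype ι]
    {E : ι → Set ℝ} [∀ i, DecidablePred fun l => x l ∈ E i]
    (hE : Pairwise (Function.onFun Disjoint E)) (h0 : ∀ i, x 0 ∉ E i)
    (h1 : ∀ i, x (Fin.last (k + 1)) ∉ E i) :
    ∑ i, (Finset.univ.filter fun l => x l ∈ E i).card ≤ k := by
  have hdisj : ∀ i i', i ≠ i' → Disjoint (Finset.univ.filter fun l => x l ∈ E i)
      (Finset.univ.filter fun l => x l ∈ E i') := fun i i' hii' =>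
    Finset.disjoint_filter.2 fun _ _ hl => Set.disjoint_left.1 (hE hii') hl
  rw [← Finset.card_biUnion fun i _ i' _ => hdisj i i']
  have hsub : (Finset.univ.biUnion fun i => Finset.univ.filter fun l => x l ∈ E i) ⊆
      ({0, Fin.last (k + 1)} : Finset (Fin (k + 2)))ᶜ := by
    intro l hl
    obtain ⟨i, -, hi⟩ := Finset.mem_biUnion.1 hl
    have hi : x l ∈ E i := (Finset.mem_filter.1 hi).2
    simp only [Finset.mem_compl, Finset.mem_insert, Finset.mem_singleton]
    rintro (rfl | rfl)
    exacts [h0 i hi, h1 i hi]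
  refine (Finset.card_le_card hsub).trans_eq ?_
  rw [Finset.card_compl, Finset.card_pair (Fin.last_pos).ne, Fintype.card_fin, Nat.add_sub_cancel]

end StepFunctions

lemma IsSharpTransition.add_setIntegral_le {f w : ℝ → ℝ} {p κ r A B γ : ℝ}
    (h : IsSharpTransition f w p κ r A B) (hκ : 0 ≤ κ) (hκr : κ < r) (h3κ : 3 * κ ≤ r)
    (hf : IntegrableOn f (Ioo (p - r) (p + r))) (hw : IntegrableOn w (Ioo (p - r) (p + r)))
    (hγ_ge : κ * |B - A| ≤ γ) (hγ_le : γ + κ * |B - A| ≤ (r - κ) * |B - A|)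
    {m : ℕ} {x : Fin (m + 1) → ℝ} {a : Fin m → ℝ} (hx : StrictMono x) (hx0 : x 0 ≤ p - r)
    (hx1 : p + r ≤ x (Fin.last m)) :
    γ + ∫ t in Ioo (p - r) (p + r), |w t - f t| ≤
      γ * (Finset.univ.filter fun l => x l ∈ Ioo (p - r) (p + r)).card +
        ∫ t in Ioo (p - r) (p + r), |stepF x a t - f t| := by
  have hv : IntegrableOn (fun t => |stepF x a t - f t|) (Ioo (p - r) (p + r)) :=
    (integrable_stepF.integrableOn.sub hf).abs
  have hw_le := h.setIntegral_le hκ hκr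
  set N := Finset.univ.filter fun l => x l ∈ Ioo (p - r) (p + r)
  have hN : ∀ l, l ∈ N ↔ x l ∈ Ioo (p - r) (p + r) := fun l => by
    simp only [N, Finset.mem_filter, Finset.mem_univ, true_and]
  have hcard : N.card = 0 ∨ N.card = 1 ∨ 2 ≤ N.card := by omega
  rcases hcard with hcard | hcard | hcard
  · have hnone : ∀ l, x l ∉ Ioo (p - r) (p + r) := fun l hl =>
      Finset.card_ne_zero_of_mem ((hN l).2 hl) hcard
    obtain ⟨c, hc⟩ := exists_stepF_eq_const (a := a) hx hx0 (by linarith) hnone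
    rw [hcard, Nat.cast_zero, mul_zero, zero_add]
    linarith [h.le_setIntegral_of_const hκ hκr hc hv]
  · obtain ⟨l, hl⟩ := Finset.card_eq_one.1 hcard
    have hy : x l ∈ Ioo (p - r) (p + r) := (hN l).1 (hl ▸ Finset.mem_singleton_self l)
    have honly : ∀ k, x k ∈ Ioo (p - r) (p + r) → x k = x l := fun k hk => by
      have hk' := (hN k).2 hk
      rw [hl, Finset.mem_singleton] at hk'
      rw [hk']
    obtain ⟨c, hc⟩ := exists_stepF_eq_const (a := a) hx hx0 (by linarith) (q := x l)
      fun k hk => hk.2.ne (honly k ⟨hk.1, hk.2.trans hy.2⟩)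
    obtain ⟨d, hd⟩ := exists_stepF_eq_const (a := a) hx (hx0.trans hy.1.le)
      (hy.2.trans_le hx1) (q := p + r) fun k hk => hk.1.ne' (honly k ⟨hy.1.trans hk.1, hk.2⟩)
    rw [hcard, Nat.cast_one, mul_one]
    exact add_le_add le_rfl (h.setIntegral_le_of_one_jump hκ hκr h3κ
      (fun t ht => hc t ⟨ht.1.1, ht.2⟩) (fun t ht => hd t ⟨ht.2, ht.1.2⟩) (hw.sub hf).abs hv)
  · have hnonneg : 0 ≤ ∫ t in Ioo (p - r) (p + r), |stepF x a t - f t| :=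
      integral_nonneg fun t => abs_nonneg _
    have hγ2 : γ * 2 ≤ γ * N.card :=
      mul_le_mul_of_nonneg_left (by exact_mod_cast hcard)
        ((mul_nonneg hκ (abs_nonneg _)).trans hγ_ge)
    linarith

lemma add_L1dist_le_PottsVal {ι : Type*} [Fintype ι] {f w u : ℝ → ℝ} {p A B : ι → ℝ}
    {κ r γ : ℝ} (h : ∀ i, IsSharpTransition f w (p i) κ r (A i) (B i)) (hκ : 0 ≤ κ)
    (hκr : κ < r) (h3κ : 3 * κ ≤ r)
    (hdisj : Pairwise (Function.onFun Disjoint fun i => Ioo (p i - r) (p i + r)))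
    (h01 : ∀ i, Ioo (p i - r) (p i + r) ⊆ Ioo 0 1)
    (hwf : ∀ t, (∀ i, t ∉ Ioo (p i - r) (p i + r)) → w t = f t)
    (hf : IntegrableOn f (Icc 0 1)) (hw : IntegrableOn w (Icc 0 1)) (hγ : 0 ≤ γ)
    (hγ_ge : ∀ i, κ * |B i - A i| ≤ γ)
    (hγ_le : ∀ i, γ + κ * |B i - A i| ≤ (r - κ) * |B i - A i|) (hu : IsPC u) :
    γ * Fintype.card ι + L1dist w f ≤ PottsVal γ f u := by
  obtain ⟨x, a, hx, hx0, hx1, hux⟩ := exists_isPCRep_jumps hu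
  have hE : ∀ i, MeasurableSet (Ioo (p i - r) (p i + r)) := fun _ => measurableSet_Ioo
  have hE01 : ∀ i, Ioo (p i - r) (p i + r) ⊆ Icc 0 1 := fun i =>
    (h01 i).trans Ioo_subset_Icc_self
  have hwf_int : IntegrableOn (fun t => |w t - f t|) (Icc 0 1) := (hw.sub hf).abs
  have hcount : ∑ i, (Finset.univ.filter fun l => x l ∈ Ioo (p i - r) (p i + r)).card ≤ jumps u :=
    sum_card_filter_mem_le hdisj (fun i hi => lt_irrefl _ (hx0 ▸ (h01 i hi).1))
      fun i hi => lt_irrefl _ (hx1 ▸ (h01 i hi).2)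
  have hlocal : ∀ i, γ + ∫ t in Ioo (p i - r) (p i + r), |w t - f t| ≤
      γ * (Finset.univ.filter fun l => x l ∈ Ioo (p i - r) (p i + r)).card +
        ∫ t in Ioo (p i - r) (p i + r), |stepF x a t - f t| := by
    intro i
    have hends := (Ioo_subset_Ioo_iff (by linarith)).1 (h01 i)
    exact (h i).add_setIntegral_le hκ hκr h3κ (hf.mono_set (hE01 i)) (hw.mono_set (hE01 i))
      (hγ_ge i) (hγ_le i) hx (hx0.trans_le hends.1) (hends.2.trans_eq hx1.symm)
  calc γ * Fintype.card ι + L1dist w f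
    _ = ∑ i, (γ + ∫ t in Ioo (p i - r) (p i + r), |w t - f t|) := by
        rw [L1dist, mu01, setIntegral_eq_sum_of_eq_zero measurableSet_Icc hE hdisj hE01
          hwf_int fun t _ ht => by rw [hwf t ht, sub_self, abs_zero]]
        simp only [Finset.sum_add_distrib, Finset.sum_const, Finset.card_univ,
          nsmul_eq_mul, mul_comm]
    _ ≤ ∑ i, (γ * (Finset.univ.filter fun l => x l ∈ Ioo (p i - r) (p i + r)).card +
          ∫ t in Ioo (p i - r) (p i + r), |stepF x a t - f t|) :=
        Finset.sum_le_sum fun i _ => hlocal i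
    _ = γ * (∑ i, (Finset.univ.filter fun l => x l ∈ Ioo (p i - r) (p i + r)).card : ℕ) +
          ∑ i, ∫ t in Ioo (p i - r) (p i + r), |stepF x a t - f t| := by
        rw [Finset.sum_add_distrib, Nat.cast_sum, Finset.mul_sum]
    _ ≤ γ * jumps u + ∫ t in Icc 0 1, |stepF x a t - f t| := by
        refine add_le_add (mul_le_mul_of_nonneg_left (by exact_mod_cast hcount) hγ) ?_
        exact sum_setIntegral_le hE hdisj hE01 (integrable_stepF.integrableOn.sub hf).abs
          fun t => abs_nonneg _
    _ = PottsVal γ f u := by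
        rw [PottsVal, L1dist, integral_congr_ae (hux.mono fun t ht => by rw [ht]), mu01]

section StepOn

variable {n : ℕ} {j j' : Fin n → ℝ} {α : Fin (n + 1) → ℝ} {t t' : ℝ}

lemma stepOn_eq_of_iff {k : Fin (n + 1)} (hk : ∀ i, j i < t ↔ i.val < k.val) :
    stepOn j α t = α k := by
  have hcard : (Finset.univ.filter fun i => j i < t).card = k.val := by
    simp only [hk, Fin.card_filter_val_lt, min_eq_right (Nat.lt_succ_iff.1 k.isLt)]
  rw [stepOn]
  exact congrArg α (Fin.ext hcard)

lemma stepOn_congr (h : ∀ i, j i < t ↔ j' i < t') : stepOn j α t = stepOn j' α t' := by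
  simp only [stepOn, h]

lemma stepOn_add_const (m : ℝ) : stepOn (fun i => j i + m) α t = stepOn j α (t - m) :=
  stepOn_congr fun _ => lt_sub_iff_add_lt.symm

lemma stepOn_sub_of_abs_lt {s : ℝ} (h : ∀ i, |s| < |t - j i|) :
    stepOn j α (t - s) = stepOn j α t := by
  refine stepOn_congr fun i => ?_
  obtain ⟨hs, hs'⟩ := abs_le.1 (le_refl |s|)
  rcases lt_abs.1 (h i) with hi | hi
  · exact iff_of_true (by linarith) (by linarith [abs_nonneg s])
  · exact iff_of_false (by linarith) (by linarith [abs_nonneg s])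

lemma abs_stepOn_le (t : ℝ) : |stepOn j α t| ≤ ‖α‖ := norm_le_pi_norm α _

lemma measurable_stepOn : Measurable (stepOn j α) := by
  have hcard : Measurable fun t => (Finset.univ.filter fun i => j i < t).card := by
    simp only [Finset.card_filter]
    exact Finset.measurable_fun_sum _ fun i _ =>
      Measurable.ite measurableSet_Ioi measurable_const measurable_const
  have heq : stepOn j α = (fun c : ℕ => if h : c < n + 1 then α ⟨c, h⟩ else 0) ∘
      fun t => (Finset.univ.filter fun i => j i < t).card := by
    ext t
    rw [Function.comp_apply, dif_pos, stepOn]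
  rw [heq]
  exact measurable_from_nat.comp hcard

lemma integrableOn_stepOn {s : Set ℝ} (hs : volume s ≠ ∞) : IntegrableOn (stepOn j α) s :=
  Measure.integrableOn_of_bounded hs measurable_stepOn.aestronglyMeasurable
    (ae_of_all _ abs_stepOn_le)

end StepOn

section Jumps

variable {n : ℕ} {j : Fin (n + 1) → ℝ}

lemma jext_succ_castSucc (i : Fin (n + 1)) : jext j i.succ.castSucc = j i := by
  rw [← Fin.succ_castSucc, jext, Fin.cons_succ, Fin.snoc_castSucc]

lemma jext_last : jext j (Fin.last (n + 2)) = 1 := by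
  rw [← Fin.succ_last, jext, Fin.cons_succ, Fin.snoc_last]

lemma jext_strictMono (hj : StrictMono j) (hj0 : 0 < j 0) (hj1 : j (Fin.last n) < 1) :
    StrictMono (jext j) := by
  refine Fin.strictMono_iff_lt_succ.2 fun i => ?_
  cases i using Fin.cases with
  | zero => exact hj0.trans_eq (jext_succ_castSucc 0).symm
  | succ i =>
    rw [jext_succ_castSucc]
    cases i using Fin.lastCases with
    | last => exact hj1.trans_eq jext_last.symm
    | cast i =>
      rw [Fin.succ_castSucc, Fin.succ_castSucc, jext_succ_castSucc]
      exact hj i.castSucc_lt_succ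

lemma lmin_pos (hJ : StrictMono (jext j)) : 0 < lmin j :=
  (Finset.lt_inf'_iff _).2 fun i _ => sub_pos.2 (hJ i.castSucc_lt_succ)

lemma lmin_le_jext_sub (hJ : StrictMono (jext j)) {k l : Fin (n + 3)} (hkl : k < l) :
    lmin j ≤ jext j l - jext j k := by
  obtain ⟨k, rfl⟩ := Fin.exists_castSucc_eq.2 (hkl.trans_le (Fin.le_last l)).ne
  have hgap : lmin j ≤ jext j k.succ - jext j k.castSucc :=
    Finset.inf'_le (fun i : Fin (n + 2) => jext j i.succ - jext j i.castSucc) (Finset.mem_univ k)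
  linarith [hJ.monotone (Fin.castSucc_lt_iff_succ_le.1 hkl)]

lemma lmin_le_sub (hJ : StrictMono (jext j)) {k l : Fin (n + 1)} (hkl : k < l) :
    lmin j ≤ j l - j k := by
  simpa only [jext_succ_castSucc] using
    lmin_le_jext_sub hJ (k := k.succ.castSucc) (l := l.succ.castSucc) (by simpa using hkl)

lemma lmin_le_apply (hJ : StrictMono (jext j)) (i : Fin (n + 1)) : lmin j ≤ j i := by
  have h := lmin_le_jext_sub hJ (k := 0) (l := i.succ.castSucc) (Fin.castSucc_pos i.succ_pos)
  rwa [jext_succ_castSucc, jext, Fin.cons_zero, sub_zero] at h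

lemma lmin_le_one_sub (hJ : StrictMono (jext j)) (i : Fin (n + 1)) : lmin j ≤ 1 - j i := by
  simpa only [jext_succ_castSucc, jext_last] using
    lmin_le_jext_sub hJ (k := i.succ.castSucc) (Fin.castSucc_lt_last _)

lemma isPCRep_stepOn {α : Fin (n + 2) → ℝ} (hJ : StrictMono (jext j)) :
    IsPCRep (stepOn j α) (jext j) α := by
  refine ⟨hJ, rfl, jext_last, ?_⟩
  have hnull : volume (range (jext j)) = 0 := (finite_range _).measure_zero _
  filter_upwards [ae_restrict_mem measurableSet_Icc,
    ae_restrict_of_ae (compl_mem_ae_iff.2 hnull)] with t ht hnot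
  have hne : ∀ k, jext j k ≠ t := fun k hk => hnot ⟨k, hk⟩
  obtain ⟨l, hl, hl'⟩ := exists_mem_Ico_castSucc_succ (x := jext j) ht.1
    ((ht.2.trans_eq jext_last.symm).lt_of_ne (hne _).symm)
  rw [stepF_eq_of_mem hJ ⟨hl.lt_of_ne (hne _), hl'⟩]
  refine stepOn_eq_of_iff fun i => ?_
  rw [← jext_succ_castSucc (j := j) i]
  refine ⟨fun h => not_le.1 fun hle => ?_, fun h => ?_⟩
  · exact (h.trans hl').not_ge (hJ.monotone (Nat.succ_le_succ hle))
  · exact ((hJ.monotone (Fin.castSucc_le_castSucc_iff.2 h)).trans hl).lt_of_ne (hne _)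

lemma stepOn_of_abs_sub_lt {α : Fin (n + 2) → ℝ} (hJ : StrictMono (jext j)) {i : Fin (n + 1)}
    {t : ℝ} (ht : |t - j i| < lmin j) :
    stepOn j α t = if j i < t then α i.succ else α i.castSucc := by
  obtain ⟨ht1, ht2⟩ := abs_lt.1 ht
  split_ifs with hit <;> refine stepOn_eq_of_iff fun k => ?_ <;>
    rcases lt_trichotomy k i with hki | rfl | hki
  · exact iff_of_true (by linarith [lmin_le_sub hJ hki]) (Nat.lt_succ_of_lt hki)
  · exact iff_of_true hit (Nat.lt_succ_self _)
  · exact iff_of_false (by linarith [lmin_le_sub hJ hki]) (Nat.not_lt.2 hki)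
  · exact iff_of_true (by linarith [lmin_le_sub hJ hki]) hki
  · exact iff_of_false hit (lt_irrefl _)
  · exact iff_of_false (by linarith [lmin_le_sub hJ hki]) (Nat.not_lt.2 hki.le)

lemma abs_jump_le_hjumpMax {α : Fin (n + 2) → ℝ} (i : Fin (n + 1)) :
    |α i.succ - α i.castSucc| ≤ hjumpMax α :=
  Finset.le_sup' (fun i : Fin (n + 1) => |α i.succ - α i.castSucc|) (Finset.mem_univ i)

lemma hjumpMin_le_abs_jump {α : Fin (n + 2) → ℝ} (i : Fin (n + 1)) :
    hjumpMin α ≤ |α i.succ - α i.castSucc| :=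
  Finset.inf'_le (fun i : Fin (n + 1) => |α i.succ - α i.castSucc|) (Finset.mem_univ i)

/-- The open interval of radius `l_min / 2` around the jump location `j i`. These windows are
pairwise disjoint and each contains the interval `J_i` of the theorem. -/
def jumpWindow (j : Fin (n + 1) → ℝ) (i : Fin (n + 1)) : Set ℝ :=
  Ioo (j i - lmin j / 2) (j i + lmin j / 2)

lemma pairwise_disjoint_jumpWindow (hJ : StrictMono (jext j)) :
    Pairwise (Function.onFun Disjoint (jumpWindow j)) := by
  refine (pairwise_disjoint_on _).2 fun i k hik => Set.disjoint_left.2 fun t ht ht' => ?_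
  linarith [ht.2, ht'.1, lmin_le_sub hJ hik]

lemma jumpWindow_subset_Ioo (hJ : StrictMono (jext j)) (i : Fin (n + 1)) :
    jumpWindow j i ⊆ Ioo 0 1 :=
  Ioo_subset_Ioo (by linarith [lmin_pos hJ, lmin_le_apply hJ i])
    (by linarith [lmin_pos hJ, lmin_le_one_sub hJ i])

end Jumps

section Convolution

variable {K g : ℝ → ℝ} {κ t : ℝ}

lemma integrableOn_convK {s : Set ℝ} {C : ℝ} (hK : Integrable K) (hg : Measurable g)
    (hC : ∀ t, |g t| ≤ C) (hs : volume s ≠ ∞) : IntegrableOn (convK K g) s := by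
  have hmeas : AEStronglyMeasurable (convK K g) volume :=
    (hK.1.convolution_integrand (ContinuousLinearMap.mul ℝ ℝ)
      hg.aestronglyMeasurable).integral_prod_right'
  refine Measure.integrableOn_of_bounded (M := ∫ s, |K s| * C) hs hmeas (ae_of_all _ fun t => ?_)
  refine norm_integral_le_of_norm_le (hK.abs.mul_const C) (ae_of_all _ fun s => ?_)
  rw [norm_mul]
  exact mul_le_mul_of_nonneg_left (hC _) (abs_nonneg _)

lemma convK_eq_self (hKnorm : ∫ s, K s = 1) (hKsupp : Function.support K ⊆ Icc (-κ) κ)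
    (hg : ∀ s, |s| ≤ κ → g (t - s) = g t) : convK K g t = g t := by
  have hmul : ∀ s, K s * g (t - s) = K s * g t := fun s => by
    by_cases hs : K s = 0
    · rw [hs, zero_mul, zero_mul]
    · rw [hg s (abs_le.2 (hKsupp hs))]
  simp only [convK, hmul, integral_mul_const, hKnorm, one_mul]

/-- The cumulative distribution function of the density `K`. It is the profile of `convK K g`
across a single jump of `g`, and its median is the optimal displacement of a jump. -/
def kernelCDF (K : ℝ → ℝ) (t : ℝ) : ℝ := ∫ s in Iio t, K s

lemma convK_eq_of_jump {p A B : ℝ} (hK : Integrable K) (hKnorm : ∫ s, K s = 1)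
    (hKsupp : Function.support K ⊆ Icc (-κ) κ)
    (hg : ∀ s, |s| ≤ κ → g (t - s) = if p < t - s then B else A) :
    convK K g t = A + kernelCDF K (t - p) * (B - A) := by
  have hmul : ∀ s, K s * g (t - s) = K s * A + (Iio (t - p)).indicator K s * (B - A) := by
    intro s
    by_cases hs : K s = 0
    · rw [indicator_apply_eq_zero.2 fun _ => hs, hs, zero_mul, zero_mul, zero_mul, add_zero]
    · rw [hg s (abs_le.2 (hKsupp hs)), indicator_apply]
      simp only [lt_sub_comm, mem_Iio]
      split_ifs <;> ring
  simp only [convK, hmul]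
  rw [integral_add (hK.mul_const _) ((hK.indicator measurableSet_Iio).mul_const _),
    integral_mul_const, integral_mul_const, integral_indicator measurableSet_Iio, hKnorm, one_mul,
    kernelCDF]

lemma kernelCDF_mono (hK : Integrable K) (hK0 : ∀ s, 0 ≤ K s) : Monotone (kernelCDF K) :=
  fun _ _ hst => setIntegral_mono_set hK.integrableOn (ae_of_all _ hK0)
    (ae_of_all _ (Iio_subset_Iio hst))

lemma kernelCDF_nonneg (hK0 : ∀ s, 0 ≤ K s) (t : ℝ) : 0 ≤ kernelCDF K t :=
  integral_nonneg hK0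

lemma kernelCDF_le_one (hK : Integrable K) (hK0 : ∀ s, 0 ≤ K s) (hKnorm : ∫ s, K s = 1)
    (t : ℝ) : kernelCDF K t ≤ 1 :=
  (setIntegral_le_integral hK (ae_of_all _ hK0)).trans_eq hKnorm

lemma kernelCDF_of_le (hKsupp : Function.support K ⊆ Icc (-κ) κ) (ht : t ≤ -κ) :
    kernelCDF K t = 0 :=
  setIntegral_eq_zero_of_forall_eq_zero fun _ hs => Function.notMem_support.1 fun hs' =>
    ((mem_Iio.1 hs).trans_le ht).not_ge (hKsupp hs').1

lemma kernelCDF_of_lt (hKnorm : ∫ s, K s = 1) (hKsupp : Function.support K ⊆ Icc (-κ) κ)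
    (ht : κ < t) : kernelCDF K t = 1 := by
  rw [kernelCDF, setIntegral_eq_integral_of_forall_compl_eq_zero, hKnorm]
  exact fun _ hs => Function.notMem_support.1 fun hs' => hs ((hKsupp hs').2.trans_lt ht)

lemma continuous_kernelCDF (hK : Integrable K) : Continuous (kernelCDF K) :=
  continuous_iff_continuousAt.2 fun t =>
    (hK.integrableOn (s := Iio (t + 1))).continuousOn_Iic_primitive_Iio.continuousAt
      (Iic_mem_nhds (lt_add_one t))

lemma exists_kernelCDF_eq_half (hK : Integrable K) (hKnorm : ∫ s, K s = 1)
    (hKsupp : Function.support K ⊆ Icc (-κ) κ) : ∃ m, |m| ≤ κ ∧ kernelCDF K m = 1 / 2 := by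
  have hleft := kernelCDF_of_le hKsupp le_rfl
  have hright := kernelCDF_of_lt hKnorm hKsupp (lt_add_one κ)
  obtain ⟨m, hm⟩ := mem_range_of_exists_le_of_exists_ge (c := 1 / 2) (continuous_kernelCDF hK)
    ⟨-κ, by rw [hleft]; norm_num⟩ ⟨κ + 1, by rw [hright]; norm_num⟩
  refine ⟨m, abs_le.2 ⟨not_lt.1 fun hlt => ?_, not_lt.1 fun hlt => ?_⟩, hm⟩
  · rw [kernelCDF_of_le hKsupp hlt.le] at hm
    norm_num at hm
  · rw [kernelCDF_of_lt hKnorm hKsupp hlt] at hm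
    norm_num at hm

end Convolution

section Deconvolution

variable {n : ℕ} {j : Fin (n + 1) → ℝ} {α : Fin (n + 2) → ℝ} {K : ℝ → ℝ} {κ m γ : ℝ}

lemma abs_ite_kernelCDF_sub {A B s : ℝ} (hK : Integrable K) (hK0 : ∀ s, 0 ≤ K s)
    (hKnorm : ∫ s, K s = 1) (hm : kernelCDF K m = 1 / 2) :
    |(if m < s then B else A) - (A + kernelCDF K s * (B - A))| =
      min (kernelCDF K s) (1 - kernelCDF K s) * |B - A| := by
  have hle_one := kernelCDF_le_one hK hK0 hKnorm s
  split_ifs with hms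
  · have hge : 1 / 2 ≤ kernelCDF K s := hm ▸ kernelCDF_mono hK hK0 hms.le
    rw [min_eq_right (by linarith), show B - (A + kernelCDF K s * (B - A)) =
      (1 - kernelCDF K s) * (B - A) by ring, abs_mul, abs_of_nonneg (by linarith)]
  · have hle : kernelCDF K s ≤ 1 / 2 := hm ▸ kernelCDF_mono hK hK0 (not_lt.1 hms)
    rw [min_eq_left (by linarith), sub_add_cancel_left, abs_neg, abs_mul,
      abs_of_nonneg (kernelCDF_nonneg hK0 s)]

lemma isSharpTransition_of_median {f w : ℝ → ℝ} {p r A B : ℝ} (hK : Integrable K)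
    (hK0 : ∀ s, 0 ≤ K s) (hKnorm : ∫ s, K s = 1) (hKsupp : Function.support K ⊆ Icc (-κ) κ)
    (hκ : 0 ≤ κ) (hm : kernelCDF K m = 1 / 2)
    (hf : ∀ t ∈ Ioo (p - r) (p + r), f t = A + kernelCDF K (t - p) * (B - A))
    (hw : ∀ t ∈ Ioo (p - r) (p + r), w t = if m < t - p then B else A) :
    IsSharpTransition f w p κ r A B where
  eq_left t ht := by
    rw [hf t ⟨ht.1, by linarith [ht.1, ht.2]⟩, kernelCDF_of_le hKsupp (by linarith [ht.2]),
      zero_mul, add_zero]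
  eq_right t ht := by
    rw [hf t ⟨by linarith [ht.1, ht.2], ht.2⟩,
      kernelCDF_of_lt hKnorm hKsupp (by linarith [ht.1]), one_mul, add_sub_cancel]
  mem_segment t ht := by
    rw [hf t ht, segment_eq_image']
    exact ⟨_, ⟨kernelCDF_nonneg hK0 _, kernelCDF_le_one hK hK0 hKnorm _⟩, rfl⟩
  abs_sub_le_left t ht := by
    rw [hw t ht, hf t ht, abs_ite_kernelCDF_sub hK hK0 hKnorm hm, add_sub_cancel_left, abs_mul,
      abs_of_nonneg (kernelCDF_nonneg hK0 _)]
    exact mul_le_mul_of_nonneg_right (min_le_left _ _) (abs_nonneg _)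
  abs_sub_le_right t ht := by
    rw [hw t ht, hf t ht, abs_ite_kernelCDF_sub hK hK0 hKnorm hm,
      show A + kernelCDF K (t - p) * (B - A) - B = -((1 - kernelCDF K (t - p)) * (B - A)) by ring,
      abs_neg, abs_mul, abs_of_nonneg (sub_nonneg.2 (kernelCDF_le_one hK hK0 hKnorm _))]
    exact mul_le_mul_of_nonneg_right (min_le_right _ _) (abs_nonneg _)

lemma isSharpTransition_convK_stepOn (hJ : StrictMono (jext j)) (hK : Integrable K)
    (hK0 : ∀ s, 0 ≤ K s) (hKnorm : ∫ s, K s = 1) (hKsupp : Function.support K ⊆ Icc (-κ) κ)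
    (hκl : 2 * κ ≤ lmin j) (hmκ : |m| ≤ κ) (hm : kernelCDF K m = 1 / 2) (i : Fin (n + 1)) :
    IsSharpTransition (convK K (stepOn j α)) (stepOn (fun k => j k + m) α) (j i) κ (lmin j / 2)
      (α i.castSucc) (α i.succ) := by
  have hstep : ∀ t ∈ jumpWindow j i, ∀ s, |s| ≤ κ →
      stepOn j α (t - s) = if j i < t - s then α i.succ else α i.castSucc := fun t ht s hs =>
    stepOn_of_abs_sub_lt hJ (abs_lt.2
      ⟨by linarith [ht.1, (abs_le.1 hs).2], by linarith [ht.2, (abs_le.1 hs).1]⟩)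
  refine isSharpTransition_of_median hK hK0 hKnorm hKsupp ((abs_nonneg m).trans hmκ) hm
    (fun t ht => convK_eq_of_jump hK hKnorm hKsupp (hstep t ht)) fun t ht => ?_
  rw [stepOn_add_const, hstep t ht m hmκ]
  simp only [lt_sub_comm]

lemma convK_stepOn_eq_of_notMem_jumpWindow (hKnorm : ∫ s, K s = 1)
    (hKsupp : Function.support K ⊆ Icc (-κ) κ) (hκl : 2 * κ < lmin j) (hmκ : |m| ≤ κ) {t : ℝ}
    (ht : ∀ i, t ∉ jumpWindow j i) :
    stepOn (fun k => j k + m) α t = convK K (stepOn j α) t := by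
  have hconst : ∀ s, |s| ≤ κ → stepOn j α (t - s) = stepOn j α t := fun s hs =>
    stepOn_sub_of_abs_lt fun i => not_le.1 fun hle => ht i
      ⟨by linarith [(abs_le.1 hle).1], by linarith [(abs_le.1 hle).2]⟩
  rw [convK_eq_self hKnorm hKsupp hconst, stepOn_add_const, hconst m hmκ]

lemma PottsVal_stepOn_le (hJ : StrictMono (jext j)) (hJm : StrictMono (jext fun k => j k + m))
    (hK : Integrable K) (hK0 : ∀ s, 0 ≤ K s) (hKnorm : ∫ s, K s = 1)
    (hKsupp : Function.support K ⊆ Icc (-κ) κ) (hκl : 6 * κ ≤ lmin j) (hmκ : |m| ≤ κ)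
    (hm : kernelCDF K m = 1 / 2)
    (hγ_ge : ∀ i : Fin (n + 1), κ * |α i.succ - α i.castSucc| ≤ γ)
    (hγ_le : ∀ i : Fin (n + 1), γ + κ * |α i.succ - α i.castSucc| ≤
      (lmin j / 2 - κ) * |α i.succ - α i.castSucc|) {u : ℝ → ℝ} (hu : IsPC u) :
    PottsVal γ (convK K (stepOn j α)) (stepOn (fun k => j k + m) α) ≤
      PottsVal γ (convK K (stepOn j α)) u := by
  have hl := lmin_pos hJ
  have hκ : 0 ≤ κ := (abs_nonneg m).trans hmκ
  have hγ : 0 ≤ γ := (mul_nonneg hκ (abs_nonneg _)).trans (hγ_ge 0)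
  have hf : IntegrableOn (convK K (stepOn j α)) (Icc 0 1) :=
    integrableOn_convK hK measurable_stepOn abs_stepOn_le measure_Icc_lt_top.ne
  have hw : IntegrableOn (stepOn (fun k => j k + m) α) (Icc 0 1) :=
    integrableOn_stepOn measure_Icc_lt_top.ne
  have hjumps : jumps (stepOn (fun k => j k + m) α) ≤ n + 1 :=
    Nat.sInf_le ⟨_, _, isPCRep_stepOn hJm⟩
  calc PottsVal γ (convK K (stepOn j α)) (stepOn (fun k => j k + m) α)
    _ ≤ γ * Fintype.card (Fin (n + 1)) +
          L1dist (stepOn (fun k => j k + m) α) (convK K (stepOn j α)) := by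
        rw [Fintype.card_fin]
        exact add_le_add (mul_le_mul_of_nonneg_left (by exact_mod_cast hjumps) hγ) le_rfl
    _ ≤ PottsVal γ (convK K (stepOn j α)) u :=
        add_L1dist_le_PottsVal
          (isSharpTransition_convK_stepOn hJ hK hK0 hKnorm hKsupp (by linarith) hmκ hm) hκ
          (by linarith) (by linarith) (pairwise_disjoint_jumpWindow hJ)
          (jumpWindow_subset_Ioo hJ)
          (fun t => convK_stepOn_eq_of_notMem_jumpWindow hKnorm hKsupp (by linarith) hmκ)
          hf hw hγ hγ_ge hγ_le hu

theorem statement_15_general (hj : StrictMono j) (hj0 : 0 < j 0) (hj1 : j (Fin.last n) < 1)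
    (hadj : ∀ i : Fin (n + 1), α i.castSucc ≠ α i.succ) (hK : Integrable K)
    (hK0 : ∀ s, 0 ≤ K s) (hKnorm : ∫ s, K s = 1) (hKsupp : Function.support K ⊆ Icc (-κ) κ)
    (hγ_ge : ∀ i : Fin (n + 1), κ * |α i.succ - α i.castSucc| ≤ γ)
    (hγ_le : ∀ i : Fin (n + 1), γ + κ * |α i.succ - α i.castSucc| ≤
      (lmin j / 2 - κ) * |α i.succ - α i.castSucc|) :
    ∃ (u₃ : ℝ → ℝ) (x : Fin (n + 3) → ℝ) (a : Fin (n + 2) → ℝ),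
      IsPCRep u₃ x a ∧ (∀ i : Fin (n + 1), a i.castSucc ≠ a i.succ) ∧
      (∀ i : Fin (n + 1), x i.succ.castSucc ∈ Icc (j i - κ) (j i + κ)) ∧
      ∀ u₂, IsPC u₂ →
        PottsVal γ (convK K (stepOn j α)) u₃ ≤ PottsVal γ (convK K (stepOn j α)) u₂ := by
  have hJ := jext_strictMono hj hj0 hj1
  have hκl : 6 * κ ≤ lmin j := by
    have h3κ : 3 * κ ≤ lmin j / 2 :=
      le_of_mul_le_mul_right (by linarith [hγ_ge 0, hγ_le 0])
        (abs_sub_pos.2 (hadj 0).symm)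
    linarith
  obtain ⟨m, hmκ, hm⟩ := exists_kernelCDF_eq_half hK hKnorm hKsupp
  obtain ⟨hmκ_neg, hmκ_pos⟩ := abs_le.1 hmκ
  have hJm : StrictMono (jext fun i => j i + m) :=
    jext_strictMono (hj.add_const m) (by linarith [lmin_le_apply hJ 0])
      (by linarith [lmin_le_one_sub hJ (Fin.last n)])
  refine ⟨stepOn (fun i => j i + m) α, jext fun i => j i + m, α, isPCRep_stepOn hJm, hadj,
    fun i => ?_, fun u₂ hu₂ =>
      PottsVal_stepOn_le hJ hJm hK hK0 hKnorm hKsupp hκl hmκ hm hγ_ge hγ_le hu₂⟩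
  rw [jext_succ_castSucc]
  exact ⟨by linarith, by linarith⟩

lemma mul_abs_jump_le (hκ : 0 ≤ κ) (hγ : 2 * κ * hjumpMax α ≤ γ) (i : Fin (n + 1)) :
    κ * |α i.succ - α i.castSucc| ≤ γ := by
  have hmax := mul_le_mul_of_nonneg_left (abs_jump_le_hjumpMax (α := α) i) hκ
  linarith [mul_nonneg hκ (abs_nonneg (α i.succ - α i.castSucc))]

lemma add_mul_abs_jump_le {l : ℝ} (hκ : 0 ≤ κ) (hκl : 2 * κ ≤ l)
    (hγ : 6 * hjumpMax α * κ ≤ 1 / 2 * hjumpMin α * (l - 2 * κ) - γ) (i : Fin (n + 1)) :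
    γ + κ * |α i.succ - α i.castSucc| ≤ (l / 2 - κ) * |α i.succ - α i.castSucc| := by
  have hmax := mul_le_mul_of_nonneg_left (abs_jump_le_hjumpMax (α := α) i) hκ
  have hmin := mul_le_mul_of_nonneg_right (hjumpMin_le_abs_jump (α := α) i) (sub_nonneg.2 hκl)
  linarith [mul_nonneg hκ (abs_nonneg (α i.succ - α i.castSucc))]

end Deconvolution

theorem statement_15
    (n : ℕ) (j : Fin (n + 1) → ℝ) (α : Fin (n + 2) → ℝ)
    (hj : StrictMono j) (hj0 : 0 < j 0) (hj1 : j (Fin.last n) < 1)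
    (hadj : ∀ i : Fin (n + 1), α i.castSucc ≠ α i.succ)
    (K : ℝ → ℝ) (κ : ℝ) (hκ : 0 < κ)
    (hKint : Integrable K) (hKpos : ∀ x, 0 ≤ K x)
    (hKsym : ∀ x, K (-x) = K x) (hKnorm : (∫ x, K x) = 1)
    (hKsupp : Function.support K ⊆ Set.Icc (-κ) κ)
    (hκl : κ ≤ lmin j / 6)
    (γ : ℝ) (hγ : 0 < γ)
    (hcond : 6 * hjumpMax α * κ ≤ (1 / 2) * hjumpMin α * (lmin j - 2 * κ) - γ)
    (hcond2 : 2 * κ * hjumpMax α ≤ γ)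
    (u₂ : ℝ → ℝ) (hu₂ : IsPC u₂) :
    -- there is `u₃` with smaller Potts value having no jump in `∪ᵢ Nᵢ` and exactly one
    -- jump in each `Jᵢ`: it has a minimal representation whose `n+1` interior partition
    -- points `x_{i+1}` satisfy `x_{i+1} ∈ Jᵢ`
    ∃ (u₃ : ℝ → ℝ) (x : Fin (n + 3) → ℝ) (a : Fin (n + 2) → ℝ),
      IsPCRep u₃ x a ∧ (∀ ii : Fin (n + 1), a ii.castSucc ≠ a ii.succ) ∧
      (∀ i : Fin (n + 1), x i.succ.castSucc ∈ Set.Icc (j i - κ) (j i + κ)) ∧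
      PottsVal γ (convK K (stepOn j α)) u₃ ≤ PottsVal γ (convK K (stepOn j α)) u₂ := by
  obtain ⟨u₃, x, a, hrep, ha, hx, hle⟩ := statement_15_general hj hj0 hj1 hadj hKint hKpos hKnorm
    hKsupp (mul_abs_jump_le hκ.le hcond2) (add_mul_abs_jump_le hκ.le (by linarith) hcond)
  exact ⟨u₃, x, a, hrep, ha, hx, hle u₂ hu₂⟩
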